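/- Let X be a real reflexive Banach space and let T : X → X be a compact bounded linear operator with M_T = {x, −x} for some unit vector x. If T is right symmetric in the operator space, then Tx is a right symmetric point of X. Moreover, if in addition Tx is a smooth point, then Tx is also a left symmetric point of X. -/

import Mathlib

open Filter Topology Set

/-- Birkhoff–James orthogonality: `x ⊥_B y` iff `‖x + t • y‖ ≥ ‖x‖` for all real `t`.
For bounded linear operators this is orthogonality in the operator norm. -/
def BJOrth {E : Type*} [NormedAddCommGroup E] [NormedSpace ℝ E] (x y : E) : Prop :=
  ∀ t : ℝ, ‖x‖ ≤ ‖x + t • y‖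

/-- A point `x` is left symmetric if `x ⊥_B y` implies `y ⊥_B x` for all `y`. -/
def LeftSymPt {E : Type*} [NormedAddCommGroup E] [NormedSpace ℝ E] (x : E) : Prop :=
  ∀ y : E, BJOrth x y → BJOrth y x

/-- A point `x` is right symmetric if `y ⊥_B x` implies `x ⊥_B y` for all `y`. -/
def RightSymPt {E : Type*} [NormedAddCommGroup E] [NormedSpace ℝ E] (x : E) : Prop :=
  ∀ y : E, BJOrth y x → BJOrth x y

/-- A unit vector `x` is a smooth point if it has a unique norming functional. -/
def SmoothPt {E : Type*} [NormedAddCommGroup E] [NormedSpace ℝ E] (x : E) : Prop :=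
  ∃! f : E →L[ℝ] ℝ, ‖f‖ = 1 ∧ f x = 1

/-- A normed space is reflexive if the canonical embedding into the double dual is surjective. -/
def ReflexiveSp (E : Type*) [NormedAddCommGroup E] [NormedSpace ℝ E] : Prop :=
  Function.Surjective (NormedSpace.inclusionInDoubleDual ℝ E)

/-- The Kadets–Klee property: weak convergence of a sequence together with convergence of norms
implies norm convergence. -/
def KadetsKlee (E : Type*) [NormedAddCommGroup E] [NormedSpace ℝ E] : Prop :=
  ∀ (x : ℕ → E) (x₀ : E),
    (∀ f : E →L[ℝ] ℝ, Tendsto (fun n => f (x n)) atTop (nhds (f x₀))) →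
    Tendsto (fun n => ‖x n‖) atTop (nhds ‖x₀‖) →
    Tendsto (fun n => ‖x n - x₀‖) atTop (nhds 0)

/-- The norm attaining set `M_T` of a bounded linear operator. -/
def normAttain {X Y : Type*} [NormedAddCommGroup X] [NormedSpace ℝ X]
    [NormedAddCommGroup Y] [NormedSpace ℝ Y] (T : X →L[ℝ] Y) : Set X :=
  {x | ‖x‖ = 1 ∧ ‖T x‖ = ‖T‖}

/-- `inPlus u v` means `v ∈ u⁺`, i.e. `‖u + t • v‖ ≥ ‖u‖` for all `t ≥ 0`. -/
def inPlus {E : Type*} [NormedAddCommGroup E] [NormedSpace ℝ E] (u v : E) : Prop :=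
  ∀ t : ℝ, 0 ≤ t → ‖u‖ ≤ ‖u + t • v‖

/-- `inMinus u v` means `v ∈ u⁻`, i.e. `‖u + t • v‖ ≥ ‖u‖` for all `t ≤ 0`. -/
def inMinus {E : Type*} [NormedAddCommGroup E] [NormedSpace ℝ E] (u v : E) : Prop :=
  ∀ t : ℝ, t ≤ 0 → ‖u‖ ≤ ‖u + t • v‖

/-!
For a compact operator `B` on a reflexive space, `z ↦ B z` is weak-to-norm continuous on the weakly
compact unit ball. If `T ⊥_B A`, each set `{z | ‖z‖ ≤ 1 ∧ ‖T‖ ≤ ‖T z + t • A z‖}` with `t > 0` is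
therefore weakly compact and nonempty, and by convexity of `t ↦ ‖T z + t • A z‖` these sets decrease
as `t ↓ 0`. A common point `z` lies in `M_T` and satisfies `A z ∈ (T z)⁺`; replacing `A` by `-A`
gives `T x ⊥_B A x` when `M_T = {x, -x}`. Given `y ⊥_B T x`, apply this to the rank one operator
`A = f(·) y`, where `f` norms `x`.

For left symmetry, let `T x ⊥_B y` and choose `b` with `y + b • T x ⊥_B T x`. By right symmetry and
James's theorem some norming functional of `T x` kills `y + b • T x`, and another one kills `y`; by
smoothness they coincide, so `b = 0`.
-/

open Metric

section WeakTopology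

lemma continuousOn_of_comp_of_isCompact {α β γ : Type*} [TopologicalSpace α] [TopologicalSpace β]
    [TopologicalSpace γ] [T2Space γ] {g : β → γ} {K : Set β} (hK : IsCompact K)
    (hg : ContinuousOn g K) (hinj : InjOn g K) {f : α → β} {s : Set α}
    (hfK : MapsTo f s K) (hgf : ContinuousOn (g ∘ f) s) : ContinuousOn f s := by
  have : CompactSpace K := isCompact_iff_compactSpace.1 hK
  have hemb : IsClosedEmbedding (g ∘ ((↑) : K → β)) :=
    hg.domRestrict.isClosedEmbedding hinj.injective
  have hrestrict : Continuous (hfK.restrict f s K) :=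
    hemb.isEmbedding.continuous_iff.2 hgf.domRestrict
  exact continuousOn_iff_continuous_domRestrict.2 (continuous_subtype_val.comp hrestrict)

lemma continuousOn_toWeakSpace_symm_of_isCompactOperator {𝕜 E F : Type*} [RCLike 𝕜]
    [SeminormedAddCommGroup E] [NormedSpace 𝕜 E] [NormedAddCommGroup F] [NormedSpace 𝕜 F]
    {T : E →L[𝕜] F} (hT : IsCompactOperator T) {s : Set E} (hs : Bornology.IsBounded s) :
    ContinuousOn (T ∘ (toWeakSpace 𝕜 E).symm) (toWeakSpace 𝕜 E '' s) := by
  refine continuousOn_of_comp_of_isCompact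
    (IsCompactOperator.isCompact_closure_image_of_bounded (f := (T : E →ₗ[𝕜] F)) hT hs)
    (toWeakSpaceCLM 𝕜 F).continuous.continuousOn toWeakSpaceCLM_bijective.injective.injOn ?_
    (WeakSpace.map T).continuous.continuousOn
  rintro _ ⟨x, hx, rfl⟩
  exact subset_closure (mem_image_of_mem T hx)

lemma ReflexiveSp.isCompact_toWeakSpace_image {E : Type*} [NormedAddCommGroup E]
    [NormedSpace ℝ E] (hE : ReflexiveSp E) {s : Set E} (hconv : Convex ℝ s) (hclosed : IsClosed s)
    (hbdd : Bornology.IsBounded s) : IsCompact (toWeakSpace ℝ E '' s) := by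
  have hsurj : Function.Surjective (NormedSpace.inclusionInDoubleDualWeak ℝ E) :=
    StrongDual.toWeakDual.surjective.comp hE
  have hcompact : IsCompact (closure (toWeakSpace ℝ E '' s)) := by
    refine NormedSpace.isCompact_closure_of_isBounded ℝ E _ ?_ fun Φ _ => hsurj Φ
    rwa [preimage_image_eq _ (toWeakSpace ℝ E).injective]
  rwa [← hconv.toWeakSpace_closure (𝕜 := ℝ), hclosed.closure_eq] at hcompact

lemma ReflexiveSp.isCompact_toWeakSpace_image_inter_preimage {E F : Type*}
    [NormedAddCommGroup E] [NormedSpace ℝ E] [NormedAddCommGroup F] [NormedSpace ℝ F]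
    (hE : ReflexiveSp E) {T : E →L[ℝ] F} (hT : IsCompactOperator T) {s : Set E}
    (hconv : Convex ℝ s) (hclosed : IsClosed s) (hbdd : Bornology.IsBounded s) {C : Set F}
    (hC : IsClosed C) : IsCompact (toWeakSpace ℝ E '' (s ∩ T ⁻¹' C)) := by
  have hs := hE.isCompact_toWeakSpace_image hconv hclosed hbdd
  have hpre : IsClosed (toWeakSpace ℝ E '' s ∩ (T ∘ (toWeakSpace ℝ E).symm) ⁻¹' C) :=
    (continuousOn_toWeakSpace_symm_of_isCompactOperator hT hbdd).preimage_isClosed_of_isClosed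
      hs.isClosed hC
  have heq : toWeakSpace ℝ E '' (s ∩ T ⁻¹' C) =
      toWeakSpace ℝ E '' s ∩ (T ∘ (toWeakSpace ℝ E).symm) ⁻¹' C := by
    rw [← image_inter_preimage]
    rfl
  exact heq ▸ hs.of_isClosed_subset hpre inter_subset_left

end WeakTopology

lemma exists_dual_vector_vanishing_on {𝕜 E : Type*} [RCLike 𝕜] [SeminormedAddCommGroup E]
    [NormedSpace 𝕜 E] (S : Submodule 𝕜 E) (u : E) (hu : infDist u S ≠ 0) :
    ∃ f : StrongDual 𝕜 E, ‖f‖ = 1 ∧ f u = infDist u S ∧ ∀ w ∈ S, f w = 0 := by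
  have hmk : ‖S.mkQL u‖ = infDist u S := QuotientAddGroup.norm_mk u
  obtain ⟨g, hg, hgu⟩ := exists_dual_vector 𝕜 (S.mkQL u) (hmk.trans_ne hu)
  let f : StrongDual 𝕜 E := g ∘L S.mkQL
  have hfu : f u = infDist u S := hgu.trans (congrArg _ hmk)
  have hfS : ∀ w ∈ S, f w = 0 := fun w hw => by
    have hw0 : S.mkQL w = 0 := (Submodule.Quotient.mk_eq_zero S).2 hw
    rw [ContinuousLinearMap.comp_apply, hw0, map_zero]
  have hle : ‖f‖ ≤ 1 := f.opNorm_le_bound zero_le_one fun e => by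
    calc ‖f e‖ ≤ ‖g‖ * ‖S.mkQL e‖ := g.le_opNorm _
      _ ≤ 1 * ‖e‖ := by rw [hg]; gcongr; exact Submodule.Quotient.norm_mk_le S e
  refine ⟨f, hle.antisymm ?_, hfu, hfS⟩
  have hpos : 0 < infDist u S := infDist_nonneg.lt_of_ne' hu
  have hnorm : ‖f u‖ = infDist u S := by rw [hfu, RCLike.norm_of_nonneg infDist_nonneg]
  have hf0 : 0 < ‖f‖ :=
    pos_of_mul_pos_left (hpos.trans_le (hnorm.symm.trans_le (f.le_opNorm u))) (norm_nonneg u)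
  have hdist : infDist u S / ‖f‖ ≤ infDist u S := by
    refine (le_infDist ⟨0, zero_mem S⟩).2 fun w hw => (div_le_iff₀' hf0).2 ?_
    calc infDist u S = ‖f (u - w)‖ := by rw [map_sub, hfS w hw, sub_zero, hnorm]
      _ ≤ ‖f‖ * dist u w := dist_eq_norm u w ▸ f.le_opNorm _
  exact le_of_mul_le_mul_right ((one_mul _).trans_le ((div_le_iff₀' hf0).1 hdist)) hpos

section Orthogonality

variable {E : Type*} [NormedAddCommGroup E] [NormedSpace ℝ E] {u v : E}

lemma norm_add_smul_le_of_norm_le {r s : ℝ} (hr : 0 < r) (hrs : r ≤ s)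
    (h : ‖u‖ ≤ ‖u + r • v‖) : ‖u + r • v‖ ≤ ‖u + s • v‖ := by
  rcases hrs.eq_or_lt with rfl | hrs
  · exact le_rfl
  have hconv : ConvexOn ℝ univ fun t : ℝ => ‖u + t • v‖ :=
    ((convexOn_norm convex_univ).translate_right u).comp_linearMap (LinearMap.toSpanSingleton ℝ E v)
  refine hconv.le_right_of_left_le (mem_univ 0) (mem_univ s) (z := r) ?_ (by simpa using h)
  rw [openSegment_eq_Ioo (hr.trans hrs)]
  exact ⟨hr, hrs⟩

lemma bjOrth_zero_left (v : E) : BJOrth 0 v := fun t => by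
  simp only [norm_zero, norm_nonneg]

lemma bjOrth_zero_right (u : E) : BJOrth u 0 := fun t => by
  simp only [smul_zero, add_zero, le_refl]

lemma BJOrth.neg_right (h : BJOrth u v) : BJOrth u (-v) := fun t => by
  simpa only [smul_neg, neg_smul] using h (-t)

lemma BJOrth.inPlus (h : BJOrth u v) : inPlus u v := fun t _ => h t

lemma inPlus_neg_neg : inPlus (-u) (-v) ↔ inPlus u v := by
  simp only [inPlus, smul_neg, ← neg_add, norm_neg]

lemma bjOrth_of_inPlus_of_inPlus_neg (h : inPlus u v) (h' : inPlus u (-v)) : BJOrth u v := by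
  intro t
  rcases le_total 0 t with ht | ht
  · exact h t ht
  · simpa only [smul_neg, neg_smul, neg_neg] using h' (-t) (neg_nonneg.2 ht)

lemma exists_bjOrth_add_smul (y u : E) : ∃ b : ℝ, BJOrth (y + b • u) u := by
  rcases eq_or_ne u 0 with rfl | hu
  · exact ⟨0, bjOrth_zero_right _⟩
  have hcoercive : Tendsto (fun b : ℝ => ‖y + b • u‖) (cocompact ℝ) atTop := by
    refine tendsto_atTop_mono (fun b => ?_) (tendsto_atTop_add_const_right _ (-‖y‖)
      (tendsto_norm_cocompact_atTop.atTop_mul_const (norm_pos_iff.2 hu)))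
    rw [← norm_smul, add_comm y]
    exact norm_sub_le_norm_add (b • u) y
  obtain ⟨b, hb⟩ := Continuous.exists_forall_le (by fun_prop) hcoercive
  refine ⟨b, fun t => ?_⟩
  rw [add_assoc, ← add_smul]
  exact hb (b + t)

lemma BJOrth.infDist_span_singleton (h : BJOrth u v) : infDist u (ℝ ∙ v) = ‖u‖ := by
  refine le_antisymm ?_ ((le_infDist ⟨0, zero_mem _⟩).2 fun w hw => ?_)
  · simpa only [dist_zero_right] using infDist_le_dist_of_mem (zero_mem (ℝ ∙ v))
  · obtain ⟨t, rfl⟩ := Submodule.mem_span_singleton.1 hw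
    simpa only [dist_eq_norm, neg_smul, sub_eq_add_neg] using h (-t)

lemma BJOrth.exists_norming_functional (hu : u ≠ 0) (h : BJOrth u v) :
    ∃ f : E →L[ℝ] ℝ, (‖f‖ = 1 ∧ f u = ‖u‖) ∧ f v = 0 := by
  have hdist := h.infDist_span_singleton
  obtain ⟨f, hf, hfu, hfv⟩ :=
    exists_dual_vector_vanishing_on (ℝ ∙ v) u (hdist.trans_ne (norm_ne_zero_iff.2 hu))
  exact ⟨f, ⟨hf, hfu.trans hdist⟩, hfv v (Submodule.mem_span_singleton_self v)⟩

lemma RightSymPt.leftSymPt_of_smooth (hu : RightSymPt u)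
    (hsmooth : ∃! f : E →L[ℝ] ℝ, ‖f‖ = 1 ∧ f u = ‖u‖) : LeftSymPt u := by
  rcases eq_or_ne u 0 with rfl | hu0
  · exact fun y _ => bjOrth_zero_right y
  intro y hy
  obtain ⟨b, hb⟩ := exists_bjOrth_add_smul y u
  obtain ⟨f, hf, hfy⟩ := hy.exists_norming_functional hu0
  obtain ⟨g, hg, hgy⟩ := (hu _ hb).exists_norming_functional hu0
  have hb0 : b * ‖u‖ = 0 := by
    rwa [hsmooth.unique hg hf, map_add, map_smul, hfy, hf.2, zero_add, smul_eq_mul] at hgy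
  obtain rfl : b = 0 := (mul_eq_zero.1 hb0).resolve_right (norm_ne_zero_iff.2 hu0)
  rwa [zero_smul, add_zero] at hb

end Orthogonality

section Operators

variable {X Y : Type*} [NormedAddCommGroup X] [NormedSpace ℝ X]
  [NormedAddCommGroup Y] [NormedSpace ℝ Y] {T A : X →L[ℝ] Y} {x : X}

lemma mem_normAttain_of_norm_le_one (hT : T ≠ 0) (hx : ‖x‖ ≤ 1) (hTx : ‖T‖ ≤ ‖T x‖) :
    x ∈ normAttain T := by
  refine ⟨le_antisymm hx ?_, le_antisymm (T.unit_le_opNorm x hx) hTx⟩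
  exact le_of_mul_le_mul_left ((mul_one ‖T‖).trans_le (hTx.trans (T.le_opNorm x)))
    (norm_pos_iff.2 hT)

lemma BJOrth.of_mem_normAttain (hx : x ∈ normAttain T) (h : BJOrth (T x) (A x)) :
    BJOrth T A := fun t =>
  calc ‖T‖ = ‖T x‖ := hx.2.symm
    _ ≤ ‖(T + t • A) x‖ := h t
    _ ≤ ‖T + t • A‖ := ContinuousLinearMap.unit_le_opNorm _ x hx.1.le

lemma exists_isCompactOperator_mem_normAttain_apply_eq (hx : ‖x‖ = 1) (y : Y) :
    ∃ A : X →L[ℝ] Y, IsCompactOperator A ∧ x ∈ normAttain A ∧ A x = y := by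
  obtain ⟨f, hf, hfx⟩ := exists_dual_vector ℝ x (hx.trans_ne one_ne_zero)
  have hAx : f.smulRight y x = y := by simp [hfx, hx]
  refine ⟨f.smulRight y, ?_, ⟨hx, ?_⟩, hAx⟩
  · exact (isCompactOperator_of_locallyCompactSpace_rng
      (ContinuousLinearMap.toSpanSingleton ℝ y)).comp_clm f
  · rw [hAx, ContinuousLinearMap.norm_smulRight_apply, hf, one_mul]

lemma ReflexiveSp.exists_norm_le_one_opNorm_le (hX : ReflexiveSp X) (hT : IsCompactOperator T) :
    ∃ z, ‖z‖ ≤ 1 ∧ ‖T‖ ≤ ‖T z‖ := by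
  have hball : IsCompact (toWeakSpace ℝ X '' closedBall 0 1) :=
    hX.isCompact_toWeakSpace_image (convex_closedBall 0 1) isClosed_closedBall isBounded_closedBall
  obtain ⟨_, ⟨z, hz, rfl⟩, hmax⟩ := hball.exists_isMaxOn
    ((nonempty_closedBall.2 zero_le_one).image _)
    (continuousOn_toWeakSpace_symm_of_isCompactOperator hT isBounded_closedBall).norm
  refine ⟨z, mem_closedBall_zero_iff.1 hz, T.opNorm_le_of_unit_norm (norm_nonneg _) fun x hx => ?_⟩
  exact hmax (mem_image_of_mem _ (mem_closedBall_zero_iff.2 hx.le))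

lemma inPlus.exists_forall_pos_opNorm_le (hX : ReflexiveSp X) (hT : IsCompactOperator T)
    (hA : IsCompactOperator A) (h : inPlus T A) :
    ∃ z, ‖z‖ ≤ 1 ∧ ∀ t : ℝ, 0 < t → ‖T‖ ≤ ‖T z + t • A z‖ := by
  have hcomp (t : ℝ) : IsCompactOperator (T + t • A) := hT.add (hA.smul t)
  let K (t : Ioi (0 : ℝ)) : Set X :=
    closedBall 0 1 ∩ (T + (t : ℝ) • A) ⁻¹' {y | ‖T‖ ≤ ‖y‖}
  have hK_mono : Monotone K := by
    rintro s t hst z ⟨hz, hsz⟩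
    have hTz : ‖T z‖ ≤ ‖T‖ := T.unit_le_opNorm z (mem_closedBall_zero_iff.1 hz)
    exact ⟨hz, hsz.trans (norm_add_smul_le_of_norm_le s.2 hst (hTz.trans hsz))⟩
  have hK_nonempty (t) : (K t).Nonempty := by
    obtain ⟨z, hz, htz⟩ := hX.exists_norm_le_one_opNorm_le (hcomp t)
    exact ⟨z, mem_closedBall_zero_iff.2 hz, (h t t.2.le).trans htz⟩
  have hK_compact (t) : IsCompact (toWeakSpace ℝ X '' K t) :=
    hX.isCompact_toWeakSpace_image_inter_preimage (hcomp t) (convex_closedBall 0 1)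
      isClosed_closedBall isBounded_closedBall (isClosed_le continuous_const continuous_norm)
  obtain ⟨z, hz⟩ := IsCompact.nonempty_iInter_of_directed_nonempty_isCompact_isClosed
    (fun t => toWeakSpace ℝ X '' K t) (monotone_image.comp hK_mono).directed_ge
    (fun t => (hK_nonempty t).image _) hK_compact (fun t => (hK_compact t).isClosed)
  have hzK (t : Ioi (0 : ℝ)) : (toWeakSpace ℝ X).symm z ∈ K t := by
    obtain ⟨w, hw, rfl⟩ := mem_iInter.1 hz t
    exact hw
  exact ⟨_, mem_closedBall_zero_iff.1 (hzK ⟨1, mem_Ioi.2 one_pos⟩).1, fun t ht => (hzK ⟨t, ht⟩).2⟩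

lemma inPlus.exists_mem_normAttain (hX : ReflexiveSp X) (hT : IsCompactOperator T)
    (hA : IsCompactOperator A) (hT0 : T ≠ 0) (h : inPlus T A) :
    ∃ z ∈ normAttain T, inPlus (T z) (A z) := by
  obtain ⟨z, hz1, hz⟩ := h.exists_forall_pos_opNorm_le hX hT hA
  have hTz : ‖T‖ ≤ ‖T z‖ := by
    have hlim : Tendsto (fun t : ℝ => ‖T z + t • A z‖) (𝓝[>] 0) (𝓝 ‖T z‖) :=
      (Continuous.tendsto' (by fun_prop) 0 _ (by simp)).mono_left nhdsWithin_le_nhds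
    exact ge_of_tendsto hlim (eventually_mem_nhdsWithin.mono hz)
  refine ⟨z, mem_normAttain_of_norm_le_one hT0 hz1 hTz, fun t ht => ?_⟩
  rcases ht.eq_or_lt with rfl | ht
  · rw [zero_smul, add_zero]
  · exact (T.unit_le_opNorm z hz1).trans (hz t ht)

lemma inPlus.apply_of_normAttain_eq_pair (hX : ReflexiveSp X) (hT : IsCompactOperator T)
    (hA : IsCompactOperator A) (hT0 : T ≠ 0) (hM : normAttain T = {x, -x}) (h : inPlus T A) :
    inPlus (T x) (A x) := by
  obtain ⟨z, hz, hplus⟩ := h.exists_mem_normAttain hX hT hA hT0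
  rw [hM] at hz
  rcases hz with rfl | rfl
  · exact hplus
  · rwa [map_neg, map_neg, inPlus_neg_neg] at hplus

lemma BJOrth.apply_of_normAttain_eq_pair (hX : ReflexiveSp X) (hT : IsCompactOperator T)
    (hA : IsCompactOperator A) (hM : normAttain T = {x, -x}) (h : BJOrth T A) :
    BJOrth (T x) (A x) := by
  rcases eq_or_ne T 0 with rfl | hT0
  · exact bjOrth_zero_left _
  · exact bjOrth_of_inPlus_of_inPlus_neg
      (h.inPlus.apply_of_normAttain_eq_pair hX hT hA hT0 hM)
      (h.neg_right.inPlus.apply_of_normAttain_eq_pair hX hT hA.neg hT0 hM)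

lemma RightSymPt.apply_of_normAttain_eq_pair (hX : ReflexiveSp X) (hT : IsCompactOperator T)
    (hM : normAttain T = {x, -x}) (hTsym : RightSymPt T) : RightSymPt (T x) := by
  intro y hy
  have hx : x ∈ normAttain T := hM ▸ mem_insert x {-x}
  obtain ⟨A, hA, hxA, rfl⟩ := exists_isCompactOperator_mem_normAttain_apply_eq hx.1 y
  exact (hTsym A (.of_mem_normAttain hxA hy)).apply_of_normAttain_eq_pair hX hT hA hM

end Operators

theorem right_symmetric_operator_image_properties_general
    {X Y : Type*} [NormedAddCommGroup X] [NormedSpace ℝ X]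
    [NormedAddCommGroup Y] [NormedSpace ℝ Y] (hrefl : ReflexiveSp X)
    (T : X →L[ℝ] Y) (hTcpt : IsCompactOperator T)
    (x : X) (hMT : normAttain T = {x, -x}) (hTsym : RightSymPt T) :
    RightSymPt (T x) ∧
      ((∃! f : Y →L[ℝ] ℝ, ‖f‖ = 1 ∧ f (T x) = ‖T x‖) → LeftSymPt (T x)) :=
  have hright : RightSymPt (T x) := hTsym.apply_of_normAttain_eq_pair hrefl hTcpt hMT
  ⟨hright, hright.leftSymPt_of_smooth⟩

theorem right_symmetric_operator_image_properties
    {X : Type*} [NormedAddCommGroup X] [NormedSpace ℝ X] [CompleteSpace X]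
    (hrefl : ReflexiveSp X)
    (T : X →L[ℝ] X) (hTcpt : IsCompactOperator T)
    (x : X) (hx : ‖x‖ = 1) (hMT : normAttain T = {x, -x})
    (hTsym : RightSymPt T) :
    RightSymPt (T x) ∧
      ((∃! f : X →L[ℝ] ℝ, ‖f‖ = 1 ∧ f (T x) = ‖T x‖) → LeftSymPt (T x)) := by
  exact right_symmetric_operator_image_properties_general hrefl T hTcpt x hMT hTsym
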